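/- arXiv:1407.5898 — 11 statements merged into one kernel-verified Lean document; each statement's English description precedes it below -/
import Mathlib

section
/- Let f(x) = a₀xⁿ + ⋯ + aₙ and h(x) = c₀xᵏ + ⋯ + cₖ be non-zero polynomials with integer coefficients, with a₀ ≠ 0 and c₀ ≠ 0 their leading coefficients. If h divides f in ℤ[x], then |a₀| · (|c₀| + |c₁| + ⋯ + |cₖ|) ≤ 2ᵏ · |c₀| · ‖f‖ (equivalently, Σᵢ|cᵢ| ≤ 2ᵏ · |c₀/a₀| · ‖f‖). -/
open Polynomial

/-- The norm `‖f‖ = √(a₀² + ⋯ + aₙ²)` of an integer polynomial. -/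
noncomputable def polyNorm (f : Polynomial ℤ) : ℝ :=
  Real.sqrt (∑ i ∈ Finset.range (f.natDegree + 1), ((f.coeff i : ℝ)) ^ 2)

/-- Landau–Mignotte: if `h` divides `f` in `ℤ[x]`, then
`|a₀| · (|c₀| + ⋯ + |cₖ|) ≤ 2ᵏ · |c₀| · ‖f‖`, where `a₀, c₀` are the leading
coefficients of `f, h` and `k = deg h`. -/
theorem landau_mignotte (f h : Polynomial ℤ) (hf : f ≠ 0) (hh : h ≠ 0)
    (hdvd : h ∣ f) :
    (|f.leadingCoeff| : ℝ) *
        (∑ i ∈ Finset.range (h.natDegree + 1), |(h.coeff i : ℝ)|) ≤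
      2 ^ h.natDegree * (|h.leadingCoeff| : ℝ) * polyNorm f := by
  obtain ⟨g, rfl⟩ := hdvd
  set φ : ℤ →+* ℂ := Int.castRingHom ℂ with hφ
  have hinj : Function.Injective φ := Int.cast_injective
  have hM : ((h * g).map φ).mahlerMeasure ≤ polyNorm (h * g) := by
    refine (mahlerMeasure_le_sqrt_sum_sq_norm_coeff _).trans (le_of_eq ?_)
    unfold polyNorm
    congr 1
    change ((h * g).map φ).sum (fun _ a => ‖a‖ ^ 2) = _
    rw [Polynomial.sum_over_range _ (by simp), natDegree_map_eq_of_injective hinj]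
    refine Finset.sum_congr rfl fun i _ => ?_
    rw [coeff_map]
    simp [hφ]
  have hg : |(g.leadingCoeff : ℝ)| ≤ (g.map φ).mahlerMeasure := by
    have := leadingCoeff_le_mahlerMeasure (g.map φ)
    rw [leadingCoeff_map_of_injective hinj] at this
    simpa [hφ] using this
  have hs : (∑ i ∈ Finset.range (h.natDegree + 1), |(h.coeff i : ℝ)|) ≤
      2 ^ h.natDegree * (h.map φ).mahlerMeasure := by
    have e : (2 : ℝ) ^ h.natDegree
        = ∑ i ∈ Finset.range (h.natDegree + 1), (h.natDegree.choose i : ℝ) := by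
      exact_mod_cast (Nat.sum_range_choose h.natDegree).symm
    rw [e, Finset.sum_mul]
    refine Finset.sum_le_sum fun i _ => ?_
    have := norm_coeff_le_choose_mul_mahlerMeasure i (h.map φ)
    rw [natDegree_map_eq_of_injective hinj, coeff_map] at this
    simpa [hφ] using this
  rw [Polynomial.map_mul, mahlerMeasure_mul] at hM
  have h0 : 0 ≤ (h.map φ).mahlerMeasure := mahlerMeasure_nonneg _
  have h1 := mul_le_mul hg hs (by positivity) (mahlerMeasure_nonneg _)
  rw [leadingCoeff_mul]
  push_cast
  rw [abs_mul]
  calc _ = |(h.leadingCoeff : ℝ)| * (|(g.leadingCoeff : ℝ)| *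
        (∑ i ∈ Finset.range (h.natDegree + 1), |(h.coeff i : ℝ)|)) := by ring
    _ ≤ |(h.leadingCoeff : ℝ)| * ((g.map φ).mahlerMeasure *
        (2 ^ h.natDegree * (h.map φ).mahlerMeasure)) := by gcongr
    _ = 2 ^ h.natDegree * |(h.leadingCoeff : ℝ)| *
        ((h.map φ).mahlerMeasure * (g.map φ).mahlerMeasure) := by ring
    _ ≤ _ := by gcongr
end

section
/- Let f ∈ ℤ[x] be a non-zero polynomial of degree n ≥ 1. If h ∈ ℤ[x] is a (non-zero) divisor of f in ℤ[x], then every coefficient c of h satisfies |c| ≤ 2^(n−1) · ‖f‖. -/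
open Polynomial

lemma choose_le_aux (m i : ℕ) : (m + 1).choose i ≤ 2 ^ m := by
  cases i with
  | zero => simpa using Nat.one_le_two_pow
  | succ j =>
    rw [Nat.choose_succ_succ, ← Nat.sum_range_choose]
    by_cases hj : j + 1 ≤ m
    · have hsub : ({j, j + 1} : Finset ℕ) ⊆ Finset.range (m + 1) := by
        intro x hx
        simp only [Finset.mem_insert, Finset.mem_singleton] at hx
        simp only [Finset.mem_range]
        omega
      have := Finset.sum_le_sum_of_subset (f := fun k => m.choose k) hsub
      rwa [Finset.sum_pair (by omega)] at this
    · rw [Nat.succ_eq_add_one, Nat.choose_eq_zero_of_lt (by omega : m < j + 1), add_zero,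
        Nat.sum_range_choose]
      exact Nat.choose_le_two_pow m j

/-- If `f ∈ ℤ[x]` is non-zero of degree `n ≥ 1` and `h` is a non-zero divisor of `f`
in `ℤ[x]`, then every coefficient `c` of `h` satisfies `|c| ≤ 2^(n-1) · ‖f‖`. -/
theorem coeff_bound_of_dvd (f h : Polynomial ℤ) (hf : f ≠ 0)
    (hn : 1 ≤ f.natDegree) (hh : h ≠ 0) (hdvd : h ∣ f) :
    ∀ i : ℕ, (|h.coeff i| : ℝ) ≤ 2 ^ (f.natDegree - 1) * polyNorm f := by
  intro i
  have hinj : Function.Injective (Int.castRingHom ℂ) := Int.cast_injective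
  have hdeg : h.natDegree ≤ f.natDegree := natDegree_le_of_dvd hdvd hf
  obtain ⟨g, rfl⟩ := hdvd
  have hg : g ≠ 0 := right_ne_zero_of_mul hf
  set F := (h * g).map (Int.castRingHom ℂ) with hF
  set H := h.map (Int.castRingHom ℂ) with hH
  set G := g.map (Int.castRingHom ℂ) with hG
  have h1 := norm_coeff_le_choose_mul_mahlerMeasure i H
  have hmul : F.mahlerMeasure = H.mahlerMeasure * G.mahlerMeasure := by
    rw [hF, Polynomial.map_mul, mahlerMeasure_mul]
  have hG1 : 1 ≤ G.mahlerMeasure := by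
    apply one_le_mahlerMeasure_of_one_le_norm_leadingCoeff
    rw [hG, leadingCoeff_map_of_injective hinj]
    have := Int.one_le_abs (leadingCoeff_ne_zero.mpr hg)
    simp only [eq_intCast, Complex.norm_intCast]
    exact_mod_cast this
  have h2 : H.mahlerMeasure ≤ F.mahlerMeasure := by
    rw [hmul]
    exact le_mul_of_one_le_right (mahlerMeasure_nonneg _) hG1
  have h3 : F.mahlerMeasure ≤ polyNorm (h * g) := by
    refine (mahlerMeasure_le_sqrt_sum_sq_norm_coeff F).trans (le_of_eq ?_)
    unfold polyNorm
    congr 1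
    rw [← natDegree_map_eq_of_injective hinj (h * g), ← hF]
    have hs : F.support ⊆ Finset.range (F.natDegree + 1) := supp_subset_range (Nat.lt_succ_self _)
    rw [Finset.sum_subset hs (fun k _ hk => by simp [notMem_support_iff.mp hk])]
    refine Finset.sum_congr rfl fun k _ => ?_
    rw [hF, coeff_map, eq_intCast, Complex.norm_intCast, sq_abs]
  have h4 : ((H.natDegree.choose i : ℕ) : ℝ) ≤ 2 ^ ((h * g).natDegree - 1) := by
    rw [hH, natDegree_map_eq_of_injective hinj]
    have := (Nat.choose_le_choose i hdeg).trans
      (by simpa [Nat.sub_add_cancel hn] using choose_le_aux ((h * g).natDegree - 1) i)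
    exact_mod_cast this
  have h5 : ‖H.coeff i‖ = |(h.coeff i : ℝ)| := by
    rw [hH, coeff_map, eq_intCast, Complex.norm_intCast]
  rw [← h5]
  exact h1.trans (mul_le_mul h4 (h2.trans h3) (mahlerMeasure_nonneg _) (by positivity))
end

section
/- Let f, g ∈ ℤ[x] be non-zero polynomials of degrees n and m with leading coefficients a₀ and b₀ respectively. If h ∈ ℤ[x] divides both f and g in ℤ[x], then every coefficient c of h satisfies |c| ≤ 2^(min{n,m}) · gcd(a₀,b₀) · min{ ‖f‖/|a₀| , ‖g‖/|b₀| }. -/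
open Polynomial

lemma mahler_le_polyNorm (f : Polynomial ℤ) :
    (f.map (Int.castRingHom ℂ)).mahlerMeasure ≤ polyNorm f := by
  refine (mahlerMeasure_le_sqrt_sum_sq_norm_coeff _).trans (le_of_eq ?_)
  unfold polyNorm
  congr 1
  refine (Finset.sum_subset (fun i hi => ?_) (fun i _ hi => ?_)).trans
    (Finset.sum_congr rfl fun i _ => ?_)
  · exact Finset.mem_range.mpr (Nat.lt_succ_of_le
      ((le_natDegree_of_mem_supp i hi).trans natDegree_map_le))
  · rw [notMem_support_iff.mp hi]; simp
  · simp [coeff_map]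

lemma mahler_dvd_bound (f h : Polynomial ℤ) (hf : f ≠ 0) (hd : h ∣ f) :
    (h.map (Int.castRingHom ℂ)).mahlerMeasure ≤
      |(h.leadingCoeff : ℝ)| * (polyNorm f / |(f.leadingCoeff : ℝ)|) := by
  have hlf : 0 < |(f.leadingCoeff : ℝ)| := by
    rw [abs_pos]; exact_mod_cast leadingCoeff_ne_zero.mpr hf
  rw [← mul_div_assoc, le_div_iff₀ hlf]
  refine le_trans ?_ (mul_le_mul_of_nonneg_left (mahler_le_polyNorm f) (abs_nonneg _))
  obtain ⟨q, rfl⟩ := hd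
  rw [leadingCoeff_mul, Polynomial.map_mul, mahlerMeasure_mul]
  have h1 := leadingCoeff_le_mahlerMeasure (q.map (Int.castRingHom ℂ))
  rw [leadingCoeff_map_of_injective (RingHom.injective_int _)] at h1
  have h2 : |(q.leadingCoeff : ℝ)| ≤ (q.map (Int.castRingHom ℂ)).mahlerMeasure := by
    simpa using h1
  push_cast
  rw [abs_mul]
  have h3 := mul_le_mul_of_nonneg_left h2
    (mul_nonneg (mahlerMeasure_nonneg (h.map (Int.castRingHom ℂ))) (abs_nonneg (h.leadingCoeff : ℝ)))
  linarith

/-- If `h ∈ ℤ[x]` divides both non-zero polynomials `f` and `g` of degrees `n` and `m`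
with leading coefficients `a₀` and `b₀`, then every coefficient `c` of `h` satisfies
`|c| ≤ 2^(min n m) · gcd(a₀,b₀) · min { ‖f‖/|a₀|, ‖g‖/|b₀| }`. -/
theorem coeff_bound_of_common_dvd (f g h : Polynomial ℤ) (hf : f ≠ 0) (hg : g ≠ 0)
    (hdf : h ∣ f) (hdg : h ∣ g) :
    ∀ i : ℕ, (|h.coeff i| : ℝ) ≤
      2 ^ (min f.natDegree g.natDegree) *
        (Int.gcd f.leadingCoeff g.leadingCoeff : ℝ) *
        min (polyNorm f / |(f.leadingCoeff : ℝ)|)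
            (polyNorm g / |(g.leadingCoeff : ℝ)|) := by
  intro i
  have hc := norm_coeff_le_choose_mul_mahlerMeasure i (h.map (Int.castRingHom ℂ))
  have hM := le_min (mahler_dvd_bound f h hf hdf) (mahler_dvd_bound g h hg hdg)
  rw [← mul_min_of_nonneg _ _ (abs_nonneg (h.leadingCoeff : ℝ))] at hM
  rw [natDegree_map_eq_of_injective (RingHom.injective_int _)] at hc
  have hc' : |(h.coeff i : ℝ)| ≤
      (h.natDegree.choose i : ℝ) * (h.map (Int.castRingHom ℂ)).mahlerMeasure := by
    simpa [coeff_map] using hc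
  have hch : (h.natDegree.choose i : ℝ) ≤ 2 ^ (min f.natDegree g.natDegree) := by
    have h1 : h.natDegree.choose i ≤ 2 ^ (min f.natDegree g.natDegree) :=
      (Nat.choose_le_two_pow _ _).trans (Nat.pow_le_pow_right (by norm_num)
        (le_min (natDegree_le_of_dvd hdf hf) (natDegree_le_of_dvd hdg hg)))
    exact_mod_cast h1
  have hgcd : |(h.leadingCoeff : ℝ)| ≤ (Int.gcd f.leadingCoeff g.leadingCoeff : ℝ) := by
    have h1 : h.leadingCoeff ∣ (Int.gcd f.leadingCoeff g.leadingCoeff : ℤ) :=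
      Int.dvd_coe_gcd (leadingCoeff_dvd_leadingCoeff hdf) (leadingCoeff_dvd_leadingCoeff hdg)
    have hpos : 0 < (Int.gcd f.leadingCoeff g.leadingCoeff : ℤ) := by
      exact_mod_cast Int.gcd_pos_of_ne_zero_left _ (leadingCoeff_ne_zero.mpr hf)
    have h2 : |h.leadingCoeff| ≤ (Int.gcd f.leadingCoeff g.leadingCoeff : ℤ) :=
      Int.le_of_dvd hpos ((abs_dvd _ _).mpr h1)
    exact_mod_cast h2
  have hN : 0 ≤ min (polyNorm f / |(f.leadingCoeff : ℝ)|)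
      (polyNorm g / |(g.leadingCoeff : ℝ)|) :=
    le_min (div_nonneg (Real.sqrt_nonneg _) (abs_nonneg _))
      (div_nonneg (Real.sqrt_nonneg _) (abs_nonneg _))
  rw [mul_assoc]
  calc _ ≤ _ := hc'
    _ ≤ _ := mul_le_mul hch (hM.trans (mul_le_mul_of_nonneg_right hgcd hN))
      (mahlerMeasure_nonneg _) (by positivity)
end

section
/- Let f, g ∈ ℤ[x] be non-zero polynomials and let h ∈ ℤ[x] be a common divisor of f and g of maximal degree, i.e. h ∣ f, h ∣ g, and every common divisor of f and g has degree at most deg h. Then h is a greatest common divisor of f and g (i.e. every common divisor of f and g divides h) if and only if cont(h) is associated (equal up to sign) to gcd(cont(f), cont(g)). -/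
open Polynomial

/-- Let `f, g ∈ ℤ[x]` be non-zero and let `h` be a common divisor of `f` and `g` of
maximal degree. Then `h` is a greatest common divisor of `f` and `g` (every common
divisor divides it) if and only if the content of `h` is associated (equal up to sign)
to `gcd(cont f, cont g)`. -/
theorem maxDegree_commonDivisor_isGcd_iff_content (f g h : Polynomial ℤ)
    (hf : f ≠ 0) (hg : g ≠ 0) (hhf : h ∣ f) (hhg : h ∣ g)
    (hmax : ∀ h' : Polynomial ℤ, h' ∣ f → h' ∣ g → h'.natDegree ≤ h.natDegree) :
    (∀ h' : Polynomial ℤ, h' ∣ f → h' ∣ g → h' ∣ h) ↔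
      Associated h.content (Int.gcd f.content g.content : ℤ) := by
  have key : ∀ p : Polynomial ℤ, p ∣ f → p ∣ g →
      p.content ∣ (Int.gcd f.content g.content : ℤ) := by
    intro p h1 h2
    refine Int.dvd_coe_gcd ?_ ?_
    · exact dvd_content_iff_C_dvd.2 ((C_content_dvd p).trans h1)
    · exact dvd_content_iff_C_dvd.2 ((C_content_dvd p).trans h2)
  have hh0 : h ≠ 0 := fun e => hf (by rw [e] at hhf; exact zero_dvd_iff.1 hhf)
  constructor
  · intro H
    refine associated_of_dvd_dvd (key h hhf hhg) ?_
    refine dvd_content_iff_C_dvd.2 (H _ ?_ ?_)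
    · exact dvd_content_iff_C_dvd.1 (Int.gcd_dvd_left _ _)
    · exact dvd_content_iff_C_dvd.1 (Int.gcd_dvd_right _ _)
  · intro H
    obtain ⟨d, hdf, hdg, hd⟩ : ∃ d : Polynomial ℤ, d ∣ f ∧ d ∣ g ∧
        ∀ p : Polynomial ℤ, p ∣ f → p ∣ g → p ∣ d := by
      let _ : GCDMonoid (Polynomial ℤ) := UniqueFactorizationMonoid.toGCDMonoid _
      exact ⟨gcd f g, gcd_dvd_left f g, gcd_dvd_right f g, fun p h1 h2 => dvd_gcd h1 h2⟩
    obtain ⟨k, rfl⟩ := hd h hhf hhg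
    have hk0 : k ≠ 0 := by
      rintro rfl
      rw [mul_zero] at hdf
      exact hf (zero_dvd_iff.1 hdf)
    have hdeg := hmax _ hdf hdg
    rw [natDegree_mul hh0 hk0] at hdeg
    obtain ⟨c, rfl⟩ : ∃ c : ℤ, k = C c := ⟨_, eq_C_of_natDegree_eq_zero (by omega)⟩
    have h1 := (key _ hdf hdg).trans H.symm.dvd
    rw [content_mul, content_C] at h1
    have hc0 : h.content ≠ 0 := fun e => hh0 (content_eq_zero_iff.1 e)
    have hu : IsUnit c := by
      have h2 : h.content * normalize c ∣ h.content * 1 := by rwa [mul_one]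
      have h3 := (mul_dvd_mul_iff_left hc0).1 h2
      exact isUnit_of_dvd_one ((normalize_dvd_iff).1 h3)
    intro p hp1 hp2
    exact ((isUnit_C.2 hu).dvd_mul_right).1 (hd p hp1 hp2)
end

section
/- Let f, g ∈ ℤ[x] be non-zero polynomials with leading coefficients a₀ and b₀, let d ∈ ℤ[x] be a greatest common divisor of f and g in ℤ[x], and let p be a prime that does not divide at least one of a₀, b₀. Then deg d ≤ deg gcd(f_p, g_p), where gcd(f_p, g_p) is a greatest common divisor of f_p and g_p in (ℤ/pℤ)[x]. If moreover p does not divide the resultant res(f/d, g/d), then deg d = deg gcd(f_p, g_p). -/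
open Polynomial

/-- The Sylvester matrix of `f` and `g`: an `(m+n) × (m+n)` matrix (`n = deg f`,
`m = deg g`) whose first `m` rows contain the shifted coefficients of `f` (in
descending order) and whose last `n` rows contain the shifted coefficients of `g`. -/
def sylvester {R : Type*} [CommRing R] (f g : Polynomial R) :
    Matrix (Fin (g.natDegree + f.natDegree)) (Fin (g.natDegree + f.natDegree)) R :=
  Matrix.of fun i j =>
    if (i : ℕ) < g.natDegree then
      (if (i : ℕ) ≤ (j : ℕ) ∧ (j : ℕ) ≤ (i : ℕ) + f.natDegree then
        f.coeff (f.natDegree - ((j : ℕ) - (i : ℕ))) else 0)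
    else
      (if (i : ℕ) - g.natDegree ≤ (j : ℕ) ∧ (j : ℕ) ≤ (i : ℕ) then
        g.coeff (g.natDegree - ((j : ℕ) - ((i : ℕ) - g.natDegree))) else 0)

/-- The resultant of two polynomials: the determinant of their Sylvester matrix. -/
def resultant {R : Type*} [CommRing R] (f g : Polynomial R) : R :=
  (_root_.sylvester f g).det

/-- The reversal of each of the two blocks of rows. -/
def blockRev (m n : ℕ) : Fin (m + n) ≃ Fin (m + n) :=
  finSumFinEquiv.symm.trans ((Equiv.sumCongr Fin.revPerm Fin.revPerm).trans finSumFinEquiv)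

theorem sylvester_eq_submatrix {R : Type*} [CommRing R] (f g : Polynomial R) :
    _root_.sylvester f g = (Polynomial.sylvester g f g.natDegree f.natDegree).transpose.reindex
      (blockRev g.natDegree f.natDegree).symm Fin.revPerm := by
  ext i j
  have hj := j.isLt
  induction i using Fin.addCases with
  | left i =>
    have hi := i.isLt
    simp only [_root_.sylvester, Polynomial.sylvester, blockRev, Matrix.reindex_apply,
      Matrix.submatrix_apply, Matrix.transpose_apply, Matrix.of_apply, Equiv.symm_symm,
      Equiv.trans_apply, finSumFinEquiv_symm_apply_castAdd, Equiv.sumCongr_apply, Sum.map_inl,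
      finSumFinEquiv_apply_left, Fin.addCases_left, Fin.revPerm_apply, Fin.revPerm_symm,
      Fin.val_castAdd, Set.mem_Icc, Fin.val_rev, if_pos hi]
    by_cases h : (i : ℕ) ≤ (j : ℕ) ∧ (j : ℕ) ≤ (i : ℕ) + f.natDegree
    · rw [if_pos h, if_pos (by omega)]
      congr 1; omega
    · rw [if_neg h, if_neg (by omega)]
  | right i =>
    have hi := i.isLt
    have h0 : ¬ (g.natDegree + (i : ℕ) < g.natDegree) := by omega
    simp only [_root_.sylvester, Polynomial.sylvester, blockRev, Matrix.reindex_apply,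
      Matrix.submatrix_apply, Matrix.transpose_apply, Matrix.of_apply, Equiv.symm_symm,
      Equiv.trans_apply, finSumFinEquiv_symm_apply_natAdd, Equiv.sumCongr_apply, Sum.map_inr,
      finSumFinEquiv_apply_right, Fin.addCases_right, Fin.revPerm_apply, Fin.revPerm_symm,
      Fin.val_natAdd, Set.mem_Icc, Fin.val_rev, if_neg h0]
    by_cases h : g.natDegree + (i : ℕ) - g.natDegree ≤ (j : ℕ) ∧ (j : ℕ) ≤ g.natDegree + (i : ℕ)
    · rw [if_pos h, if_pos (by omega)]
      congr 1; omega
    · rw [if_neg h, if_neg (by omega)]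

theorem resultant_dvd (f g : Polynomial ℤ) :
    Polynomial.resultant g f ∣ _root_.resultant f g := by
  rw [_root_.resultant, sylvester_eq_submatrix, Matrix.det_reindex, Matrix.det_transpose]
  exact Dvd.intro_left _ rfl

theorem dvd_resultant (f g : Polynomial ℤ) (p : ℤ) (h : p ∣ Polynomial.resultant g f) :
    p ∣ _root_.resultant f g := h.trans (resultant_dvd f g)

theorem map_lead_ne (p : ℕ) (d f : Polynomial ℤ) (hdf : d ∣ f)
    (h : ¬ ((p : ℤ) ∣ f.leadingCoeff)) :
    (Int.castRingHom (ZMod p)) d.leadingCoeff ≠ 0 := by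
  intro h0
  rw [eq_intCast, ZMod.intCast_zmod_eq_zero_iff_dvd] at h0
  exact h (h0.trans (Polynomial.leadingCoeff_dvd_leadingCoeff hdf))

/-- Let `d` be a gcd of the non-zero polynomials `f, g ∈ ℤ[x]` and let `p` be a prime
not dividing at least one of the leading coefficients of `f` and `g`. Then
`deg d ≤ deg gcd(f_p, g_p)` for any gcd of the reductions `f_p, g_p` in `(ℤ/pℤ)[x]`;
and if moreover `p ∤ res(f/d, g/d)` then `deg d = deg gcd(f_p, g_p)`. -/
theorem degree_gcd_mod_p (f g d : Polynomial ℤ) (hf : f ≠ 0) (hg : g ≠ 0)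
    (hdf : d ∣ f) (hdg : d ∣ g)
    (hdgcd : ∀ e : Polynomial ℤ, e ∣ f → e ∣ g → e ∣ d)
    (p : ℕ) (hp : p.Prime)
    (hlead : ¬ ((p : ℤ) ∣ f.leadingCoeff) ∨ ¬ ((p : ℤ) ∣ g.leadingCoeff)) :
    ∀ e : Polynomial (ZMod p),
      e ∣ f.map (Int.castRingHom (ZMod p)) →
      e ∣ g.map (Int.castRingHom (ZMod p)) →
      (∀ e' : Polynomial (ZMod p),
        e' ∣ f.map (Int.castRingHom (ZMod p)) →
        e' ∣ g.map (Int.castRingHom (ZMod p)) → e' ∣ e) →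
      d.natDegree ≤ e.natDegree ∧
        (∀ f₁ g₁ : Polynomial ℤ, f = d * f₁ → g = d * g₁ →
          ¬ ((p : ℤ) ∣ _root_.resultant f₁ g₁) → d.natDegree = e.natDegree) := by
  intro e hef heg he
  haveI := Fact.mk hp
  set φ := Int.castRingHom (ZMod p) with hφ
  have hdl : φ d.leadingCoeff ≠ 0 := by
    rcases hlead with h | h
    · exact map_lead_ne p d f hdf h
    · exact map_lead_ne p d g hdg h
  have hdd : (d.map φ).natDegree = d.natDegree := natDegree_map_of_leadingCoeff_ne_zero φ hdl
  have hd0 : d.map φ ≠ 0 := by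
    intro h
    apply hdl
    have := congrArg (fun q => q.coeff d.natDegree) h
    simpa using this
  have hfl : ∀ q : Polynomial ℤ, ¬ ((p : ℤ) ∣ q.leadingCoeff) → q.map φ ≠ 0 := by
    intro q hq h
    apply map_lead_ne p q q dvd_rfl hq
    have := congrArg (fun q' => q'.coeff q.natDegree) h
    simpa using this
  have he0 : e ≠ 0 := by
    rintro rfl
    rw [zero_dvd_iff] at hef heg
    rcases hlead with h | h
    · exact hfl f h hef
    · exact hfl g h heg
  obtain ⟨h, rfl⟩ := he (d.map φ) (Polynomial.map_dvd φ hdf) (Polynomial.map_dvd φ hdg)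
  have hh0 : h ≠ 0 := right_ne_zero_of_mul he0
  rw [natDegree_mul hd0 hh0, hdd]
  refine ⟨Nat.le_add_right _ _, ?_⟩
  intro f₁ g₁ hf₁ hg₁ hres
  subst hf₁ hg₁
  rw [Polynomial.map_mul] at hef heg
  have h1 : h ∣ f₁.map φ := (mul_dvd_mul_iff_left hd0).1 hef
  have h2 : h ∣ g₁.map φ := (mul_dvd_mul_iff_left hd0).1 heg
  have key : ∀ c : ZMod p, c ≠ 0 → h ∣ C c → h.natDegree = 0 := by
    intro c hc hdvd
    have := natDegree_le_of_dvd hdvd (C_ne_zero.2 hc)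
    simpa using this
  have hconst : ∀ q : Polynomial ℤ, q.natDegree = 0 → q.map φ ≠ 0 → h ∣ q.map φ →
      h.natDegree = 0 := by
    intro q hq hq0 hdvd
    have := natDegree_le_of_dvd hdvd hq0
    have h3 := natDegree_map_le (f := φ) (p := q)
    omega
  suffices h.natDegree = 0 by omega
  by_cases H : g₁.natDegree ≠ 0 ∨ f₁.natDegree ≠ 0
  · obtain ⟨a, b, -, -, hab⟩ := exists_mul_add_mul_eq_C_resultant g₁ f₁ le_rfl le_rfl H
    refine key (φ (Polynomial.resultant g₁ f₁)) ?_ ?_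
    · intro h0
      rw [hφ, eq_intCast, ZMod.intCast_zmod_eq_zero_iff_dvd] at h0
      exact hres (dvd_resultant _ _ _ h0)
    · rw [← map_C, ← hab, Polynomial.map_add, Polynomial.map_mul, Polynomial.map_mul]
      exact dvd_add (h2.mul_right _) (h1.mul_right _)
  · push Not at H
    rcases hlead with hl | hl
    · have := hfl _ hl
      rw [Polynomial.map_mul] at this
      exact hconst f₁ H.2 (right_ne_zero_of_mul this) h1
    · have := hfl _ hl
      rw [Polynomial.map_mul] at this
      exact hconst g₁ H.1 (right_ne_zero_of_mul this) h2
end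

section
/- Let f, g ∈ ℤ[x] be non-zero polynomials of degrees n ≥ 1 and m ≥ 1 respectively, and let d ∈ ℤ[x] be any non-zero common divisor of f and g. Then |res(f/d, g/d)| ≤ 2^(2nm−n−m) · √((n+1)^m · (m+1)^n) · ‖f‖^m · ‖g‖^n. -/
open Polynomial

lemma aux_eval_bound (g : ℂ[X]) (a : ℂ) :
    ‖g.eval a‖ ≤ 2 ^ g.natDegree * g.mahlerMeasure * (max 1 ‖a‖) ^ g.natDegree := by
  have hs : g.Splits := IsAlgClosed.splits g
  have hp : (g.roots.map (fun b => ‖a - b‖)).prod ≤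
      (g.roots.map (fun b => (2 * max 1 ‖a‖) * max 1 ‖b‖)).prod := by
    apply Multiset.prod_map_le_prod_map₀
    · intro b _; positivity
    · intro b _
      have h1 := norm_sub_le a b
      have h2 : ‖a‖ ≤ max 1 ‖a‖ := le_max_right _ _
      have h3 : ‖b‖ ≤ max 1 ‖b‖ := le_max_right _ _
      have h4 : 1 ≤ max 1 ‖a‖ := le_max_left _ _
      have h5 : 1 ≤ max 1 ‖b‖ := le_max_left _ _
      nlinarith
  rw [Multiset.prod_map_mul, Multiset.map_const', Multiset.prod_replicate,
    ← hs.natDegree_eq_card_roots] at hp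
  have he : ‖g.eval a‖ = ‖g.leadingCoeff‖ * (g.roots.map (fun b => ‖a - b‖)).prod := by
    conv_lhs => rw [hs.eq_prod_roots]
    rw [eval_mul, eval_C, norm_mul, eval_multiset_prod, Multiset.map_map]
    congr 1
    rw [← coe_nnnorm, ← nnnormHom_apply, map_multiset_prod, Multiset.map_map, NNReal.coe_multiset_prod,
      Multiset.map_map]
    congr 1
    apply Multiset.map_congr rfl
    intro b _
    simp
  rw [he, mahlerMeasure_eq_leadingCoeff_mul_prod_roots]
  calc _ ≤ ‖g.leadingCoeff‖ * _ := mul_le_mul_of_nonneg_left hp (norm_nonneg _)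
    _ = _ := by rw [mul_pow]; ring

lemma aux_res_bound (f g : ℂ[X]) :
    ‖Polynomial.resultant f g‖ ≤ 2 ^ (f.natDegree * g.natDegree) *
      f.mahlerMeasure ^ g.natDegree * g.mahlerMeasure ^ f.natDegree := by
  have hs : f.Splits := IsAlgClosed.splits f
  rw [resultant_eq_prod_eval f g _ le_rfl hs, norm_mul, norm_pow]
  have hp : (f.roots.map (fun a => ‖g.eval a‖)).prod ≤
      (f.roots.map (fun a => (2 ^ g.natDegree * g.mahlerMeasure) *
        (max 1 ‖a‖) ^ g.natDegree)).prod := by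
    apply Multiset.prod_map_le_prod_map₀
    · intro b _; positivity
    · intro b _
      exact aux_eval_bound g b
  rw [Multiset.prod_map_mul, Multiset.map_const', Multiset.prod_replicate,
    ← hs.natDegree_eq_card_roots, Multiset.prod_map_pow] at hp
  have he : ‖(f.roots.map g.eval).prod‖ = (f.roots.map (fun a => ‖g.eval a‖)).prod := by
    rw [← coe_nnnorm, ← nnnormHom_apply, map_multiset_prod, Multiset.map_map, NNReal.coe_multiset_prod,
      Multiset.map_map]
    congr 1
  rw [he, mahlerMeasure_eq_leadingCoeff_mul_prod_roots f]
  calc _ ≤ ‖f.leadingCoeff‖ ^ g.natDegree * _ := mul_le_mul_of_nonneg_left hp (by positivity)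
    _ = _ := by rw [mul_pow, mul_pow, ← pow_mul, mul_comm g.natDegree]; ring

lemma aux_res_eq (f g : ℤ[X]) : _root_.resultant f g = Polynomial.resultant f g := by
  rw [_root_.resultant, Polynomial.resultant, ← Matrix.det_transpose (Polynomial.sylvester _ _ _ _),
    ← Matrix.det_submatrix_equiv_self
      ((finCongr (add_comm g.natDegree f.natDegree)).trans Fin.revPerm)]
  congr 1
  ext i j
  obtain ⟨k, hk⟩ : ∃ k, k = Fin.rev (Fin.cast (add_comm g.natDegree f.natDegree) i) := ⟨_, rfl⟩
  have hkv : (k : ℕ) = f.natDegree + g.natDegree - (i + 1) := by rw [hk]; simp [Fin.val_rev]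
  have hi := i.2
  have hj := j.2
  simp only [_root_.sylvester, Polynomial.sylvester, Matrix.submatrix_apply, Matrix.transpose_apply,
    Matrix.of_apply, Equiv.trans_apply, finCongr_apply, Fin.revPerm_apply]
  rw [← hk]
  induction k using Fin.addCases with
  | left k =>
    have hk2 := k.2
    simp only [Fin.val_castAdd] at hkv
    simp only [Fin.addCases_left, Set.mem_Icc, Fin.val_rev, Fin.val_cast]
    rw [if_neg (by omega)]
    split_ifs
    · congr 1; omega
    · omega
    · omega
    · rfl
  | right k =>
    have hk2 := k.2
    simp only [Fin.val_natAdd] at hkv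
    simp only [Fin.addCases_right, Set.mem_Icc, Fin.val_rev, Fin.val_cast]
    rw [if_pos (by omega)]
    split_ifs
    · congr 1; omega
    · omega
    · omega
    · rfl

lemma aux_one_le (p : ℤ[X]) (hp : p ≠ 0) :
    1 ≤ (p.map (Int.castRingHom ℂ)).mahlerMeasure := by
  apply one_le_mahlerMeasure_of_one_le_norm_leadingCoeff
  rw [leadingCoeff_map_of_injective (RingHom.injective_int _)]
  have : 1 ≤ |p.leadingCoeff| := Int.one_le_abs (leadingCoeff_ne_zero.mpr hp)
  simp only [eq_intCast, Complex.norm_intCast]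
  exact_mod_cast this

lemma aux_le_norm (p : ℤ[X]) :
    (p.map (Int.castRingHom ℂ)).mahlerMeasure ≤ polyNorm p := by
  refine (mahlerMeasure_le_sqrt_sum_sq_norm_coeff _).trans ?_
  apply Real.sqrt_le_sqrt
  simp only [coeff_map, eq_intCast, Complex.norm_intCast, sq_abs]
  apply Finset.sum_le_sum_of_subset_of_nonneg
  · intro i hi
    have := le_natDegree_of_mem_supp i hi
    have h2 := natDegree_map_le (f := Int.castRingHom ℂ) (p := p)
    simp; omega
  · intros; positivity

lemma aux_left_le (d p : ℤ[X]) (hd : d ≠ 0) :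
    (p.map (Int.castRingHom ℂ)).mahlerMeasure ≤ polyNorm (d * p) := by
  refine le_trans ?_ (aux_le_norm _)
  rw [Polynomial.map_mul, mahlerMeasure_mul]
  exact le_mul_of_one_le_left (mahlerMeasure_nonneg _) (aux_one_le d hd)

lemma aux_num (n m : ℕ) (hn : 1 ≤ n) (hm : 1 ≤ m) :
    (2 : ℝ) ^ (n * m) ≤ 2 ^ (2 * n * m - n - m) *
      Real.sqrt (((n : ℝ) + 1) ^ m * ((m : ℝ) + 1) ^ n) := by
  have hnm : n + m ≤ 2 * n * m := by nlinarith
  have hn' : (2 : ℝ) ≤ (n : ℝ) + 1 := by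
    have : (1 : ℝ) ≤ n := by exact_mod_cast hn
    linarith
  have hm' : (2 : ℝ) ≤ (m : ℝ) + 1 := by
    have : (1 : ℝ) ≤ m := by exact_mod_cast hm
    linarith
  refine (sq_le_sq₀ (by positivity) (by positivity)).mp ?_
  rw [mul_pow, Real.sq_sqrt (by positivity), ← pow_mul, ← pow_mul]
  calc (2 : ℝ) ^ (n * m * 2) ≤ 2 ^ ((2 * n * m - n - m) * 2 + (m + n)) := by
        apply pow_le_pow_right₀ (by norm_num)
        have : 2 * n * m = 2 * (n * m) := by ring
        omega
    _ = 2 ^ ((2 * n * m - n - m) * 2) * (2 ^ m * 2 ^ n) := by rw [pow_add, pow_add]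
    _ ≤ _ := by gcongr

/-- For non-zero `f, g ∈ ℤ[x]` of degrees `n, m ≥ 1` and any non-zero common divisor
`d` of `f` and `g`:
`|res(f/d, g/d)| ≤ 2^(2nm - n - m) · √((n+1)^m (m+1)^n) · ‖f‖^m · ‖g‖^n`. -/
theorem resultant_quotient_bound (f g d f₁ g₁ : Polynomial ℤ)
    (hf : f ≠ 0) (hg : g ≠ 0) (hd : d ≠ 0)
    (hn : 1 ≤ f.natDegree) (hm : 1 ≤ g.natDegree)
    (hf₁ : f = d * f₁) (hg₁ : g = d * g₁) :
    |((_root_.resultant f₁ g₁ : ℤ) : ℝ)| ≤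
      2 ^ (2 * f.natDegree * g.natDegree - f.natDegree - g.natDegree) *
        Real.sqrt ((f.natDegree + 1) ^ g.natDegree * (g.natDegree + 1) ^ f.natDegree) *
        polyNorm f ^ g.natDegree * polyNorm g ^ f.natDegree := by
  have hf0 : f₁ ≠ 0 := by rintro rfl; simp at hf₁; exact hf hf₁
  have hg0 : g₁ ≠ 0 := by rintro rfl; simp at hg₁; exact hg hg₁
  have hinj : Function.Injective (Int.castRingHom ℂ) := RingHom.injective_int _
  have hnd : f₁.natDegree ≤ f.natDegree := by rw [hf₁, natDegree_mul hd hf0]; omega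
  have hmd : g₁.natDegree ≤ g.natDegree := by rw [hg₁, natDegree_mul hd hg0]; omega
  have hF : (f₁.map (Int.castRingHom ℂ)).mahlerMeasure ≤ polyNorm f := by
    rw [hf₁]; exact aux_left_le d f₁ hd
  have hG : (g₁.map (Int.castRingHom ℂ)).mahlerMeasure ≤ polyNorm g := by
    rw [hg₁]; exact aux_left_le d g₁ hd
  have hF1 := aux_one_le f₁ hf0
  have hG1 := aux_one_le g₁ hg0
  have hb := aux_res_bound (f₁.map (Int.castRingHom ℂ)) (g₁.map (Int.castRingHom ℂ))
  rw [resultant_map_map] at hb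
  simp only [natDegree_map_eq_of_injective hinj] at hb
  rw [← aux_res_eq, eq_intCast, Complex.norm_intCast] at hb
  refine hb.trans ?_
  have h2 : (2 : ℝ) ^ (f₁.natDegree * g₁.natDegree) ≤ 2 ^ (f.natDegree * g.natDegree) :=
    pow_le_pow_right₀ (by norm_num) (Nat.mul_le_mul hnd hmd)
  have h3 := h2.trans (aux_num _ _ hn hm)
  have h4 : (f₁.map (Int.castRingHom ℂ)).mahlerMeasure ^ g₁.natDegree ≤
      polyNorm f ^ g.natDegree :=
    (pow_le_pow_left₀ (by linarith) hF _).trans (pow_le_pow_right₀ (hF1.trans hF) hmd)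
  have h5 : (g₁.map (Int.castRingHom ℂ)).mahlerMeasure ^ f₁.natDegree ≤
      polyNorm g ^ f.natDegree :=
    (pow_le_pow_left₀ (by linarith) hG _).trans (pow_le_pow_right₀ (hG1.trans hG) hnd)
  have p1 : 0 ≤ polyNorm f := Real.sqrt_nonneg _
  have p2 := mahlerMeasure_nonneg (f₁.map (Int.castRingHom ℂ))
  have p3 := mahlerMeasure_nonneg (g₁.map (Int.castRingHom ℂ))
  exact mul_le_mul (mul_le_mul h3 h4 (by positivity) (by positivity)) h5
    (by positivity) (by positivity)
end

section
/- Let f, g ∈ ℤ[x] be non-zero polynomials with leading coefficients a₀ and b₀ respectively. If h ∈ ℤ[x] is a common divisor of f and g of degree k, then every coefficient c of h satisfies |c| ≤ 2^k · gcd(a₀,b₀) · min{ ‖f‖/|a₀| , ‖g‖/|b₀| }. -/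
open Polynomial

theorem coeff_bound_aux (f h : Polynomial ℤ) (hf : f ≠ 0) (hdf : h ∣ f) (d : ℕ) (hd : 0 < d)
    (hlc : h.leadingCoeff ∣ (d : ℤ)) (i : ℕ) :
    (|h.coeff i| : ℝ) ≤ 2 ^ h.natDegree * (d : ℝ) * (polyNorm f / |(f.leadingCoeff : ℝ)|) := by
  obtain ⟨q, rfl⟩ := hdf
  have hh : h ≠ 0 := left_ne_zero_of_mul hf
  have hq : q ≠ 0 := right_ne_zero_of_mul hf
  set v := Int.castRingHom ℂ with hv
  have hinj : Function.Injective v := v.injective_int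
  have h1 := (h.map v).norm_coeff_le_choose_mul_mahlerMeasure i
  rw [natDegree_map_eq_of_injective hinj, coeff_map] at h1
  have h1' : (|h.coeff i| : ℝ) ≤ (h.natDegree.choose i : ℝ) * (h.map v).mahlerMeasure := by
    simpa [hv] using h1
  have h2 := (q.map v).leadingCoeff_le_mahlerMeasure
  rw [leadingCoeff_map_of_injective hinj] at h2
  have h2' : |(q.leadingCoeff : ℝ)| ≤ (q.map v).mahlerMeasure := by
    simpa [hv] using h2
  have h3 := ((h * q).map v).mahlerMeasure_le_sqrt_sum_sq_norm_coeff
  have h4 : √(∑ j ∈ ((h * q).map v).support, ‖((h * q).map v).coeff j‖ ^ 2)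
      ≤ polyNorm (h * q) := by
    unfold polyNorm
    apply Real.sqrt_le_sqrt
    rw [support_map_of_injective _ hinj]
    refine (Finset.sum_le_sum_of_subset_of_nonneg (supp_subset_range_natDegree_succ)
      (fun _ _ _ => by positivity)).trans (le_of_eq ?_)
    refine Finset.sum_congr rfl fun j _ => ?_
    rw [coeff_map, hv, eq_intCast, Complex.norm_intCast, sq_abs]
  have h5 := h3.trans h4
  rw [Polynomial.map_mul, mahlerMeasure_mul] at h5
  have hM := (h.map v).mahlerMeasure_nonneg
  have hqp : 0 < |(q.leadingCoeff : ℝ)| := by simpa using hq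
  have hhp : 0 < |(h.leadingCoeff : ℝ)| := by simpa using hh
  have h6 : (h.map v).mahlerMeasure * |(q.leadingCoeff : ℝ)| ≤ polyNorm (h * q) :=
    (mul_le_mul_of_nonneg_left h2' hM).trans h5
  have h7 : |(h.leadingCoeff : ℝ)| ≤ (d : ℝ) := by
    have := Int.le_of_dvd (by exact_mod_cast hd) ((abs_dvd _ _).2 hlc)
    exact_mod_cast this
  have h8 : (h.natDegree.choose i : ℝ) ≤ 2 ^ h.natDegree := by
    exact_mod_cast Nat.choose_le_two_pow _ _
  have h9 : (h.map v).mahlerMeasure ≤ (d : ℝ) * (polyNorm (h * q) / |((h * q).leadingCoeff : ℝ)|) := by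
    rw [leadingCoeff_mul, Int.cast_mul, abs_mul, ← mul_div_assoc, le_div_iff₀ (by positivity)]
    calc _ = |(h.leadingCoeff : ℝ)| * ((h.map v).mahlerMeasure * |(q.leadingCoeff : ℝ)|) := by ring
      _ ≤ _ := by gcongr
  calc _ ≤ _ := h1'
    _ ≤ 2 ^ h.natDegree * ((d : ℝ) * (polyNorm (h * q) / |((h * q).leadingCoeff : ℝ)|)) := by gcongr
    _ = _ := by ring

/-- If `h ∈ ℤ[x]` is a common divisor of degree `k` of the non-zero polynomials
`f, g ∈ ℤ[x]` with leading coefficients `a₀, b₀`, then every coefficient `c` of `h`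
satisfies `|c| ≤ 2^k · gcd(a₀,b₀) · min { ‖f‖/|a₀|, ‖g‖/|b₀| }`. -/
theorem coeff_bound_common_divisor_deg (f g h : Polynomial ℤ)
    (hf : f ≠ 0) (hg : g ≠ 0) (hdf : h ∣ f) (hdg : h ∣ g) :
    ∀ i : ℕ, (|h.coeff i| : ℝ) ≤
      2 ^ h.natDegree * (Int.gcd f.leadingCoeff g.leadingCoeff : ℝ) *
        min (polyNorm f / |(f.leadingCoeff : ℝ)|)
            (polyNorm g / |(g.leadingCoeff : ℝ)|) := by
  intro i
  have hd : 0 < Int.gcd f.leadingCoeff g.leadingCoeff :=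
    Int.gcd_pos_of_ne_zero_left _ (leadingCoeff_ne_zero.2 hf)
  have hlc : h.leadingCoeff ∣ (Int.gcd f.leadingCoeff g.leadingCoeff : ℤ) := by
    obtain ⟨a, rfl⟩ := hdf
    obtain ⟨b, rfl⟩ := hdg
    exact Int.dvd_coe_gcd (by simp) (by simp)
  rw [mul_min_of_nonneg _ _ (by positivity)]
  exact le_min (coeff_bound_aux f h hf hdf _ hd hlc i) (coeff_bound_aux g h hg hdg _ hd hlc i)
end

section
/- Let f, g ∈ ℤ[x] be non-zero polynomials with leading coefficients a₀ and b₀, and let q be a prime not dividing gcd(a₀,b₀). Set s = deg gcd(f_q, g_q), where gcd(f_q, g_q) is a greatest common divisor of f_q and g_q in (ℤ/qℤ)[x]. Then every common divisor h ∈ ℤ[x] of f and g has degree at most s, and every coefficient c of h satisfies |c| ≤ 2^s · gcd(a₀,b₀) · min{ ‖f‖/|a₀| , ‖g‖/|b₀| }. -/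
open Polynomial

lemma aux_bound (f h : Polynomial ℤ) (hf : f ≠ 0) (hd : h ∣ f) (i s d : ℕ)
    (hs : h.natDegree ≤ s) (hld : |(h.leadingCoeff : ℝ)| ≤ d) :
    |(h.coeff i : ℝ)| ≤ 2 ^ s * (d : ℝ) * (polyNorm f / |(f.leadingCoeff : ℝ)|) := by
  obtain ⟨k, rfl⟩ := hd
  have hinj : Function.Injective (Int.castRingHom ℂ) := by
    intro a b hab
    simpa using hab
  set φ := Int.castRingHom ℂ with hφ
  have h1 := Polynomial.norm_coeff_le_choose_mul_mahlerMeasure i (h.map φ)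
  have h2 := Polynomial.leadingCoeff_le_mahlerMeasure (k.map φ)
  have h3 := Polynomial.mahlerMeasure_le_sqrt_sum_sq_norm_coeff ((h * k).map φ)
  have h4 : √(∑ i ∈ ((h * k).map φ).support, ‖((h * k).map φ).coeff i‖ ^ 2) = polyNorm (h * k) := by
    unfold polyNorm
    rw [Polynomial.support_map_of_injective _ hinj]
    congr 1
    rw [← Finset.sum_subset (Polynomial.supp_subset_range_natDegree_succ (p := h * k))]
    · refine Finset.sum_congr rfl fun j _ => ?_
      rw [Polynomial.coeff_map, hφ, eq_intCast, Complex.norm_intCast, sq_abs]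
    · intro j _ hj
      rw [Polynomial.notMem_support_iff.mp hj]
      simp
  rw [h4, Polynomial.map_mul, Polynomial.mahlerMeasure_mul] at h3
  rw [Polynomial.natDegree_map_eq_of_injective hinj, Polynomial.coeff_map, hφ, eq_intCast,
    Complex.norm_intCast, ← hφ] at h1
  rw [Polynomial.leadingCoeff_map_of_injective hinj, hφ, eq_intCast, Complex.norm_intCast,
    ← hφ] at h2
  have hM0 := Polynomial.mahlerMeasure_nonneg (h.map φ)
  have hh0 : 0 < |(h.leadingCoeff : ℝ)| := by
    simpa using left_ne_zero_of_mul hf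
  have hk0 : 0 < |(k.leadingCoeff : ℝ)| := by
    simpa using right_ne_zero_of_mul hf
  have hc : ((h.natDegree.choose i : ℕ) : ℝ) ≤ 2 ^ s := by
    calc ((h.natDegree.choose i : ℕ) : ℝ) ≤ ((2 ^ h.natDegree : ℕ) : ℝ) := by
          exact_mod_cast Nat.choose_le_two_pow _ _
      _ = 2 ^ h.natDegree := by push_cast; rfl
      _ ≤ 2 ^ s := pow_le_pow_right₀ (by norm_num) hs
  have hM : (h.map φ).mahlerMeasure ≤ polyNorm (h * k) / |(k.leadingCoeff : ℝ)| := by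
    rw [le_div_iff₀ hk0]
    exact (mul_le_mul_of_nonneg_left h2 hM0).trans h3
  have hP : 0 ≤ polyNorm (h * k) := Real.sqrt_nonneg _
  have hfin : polyNorm (h * k) / |(k.leadingCoeff : ℝ)| ≤
      d * (polyNorm (h * k) / |((h * k).leadingCoeff : ℝ)|) := by
    rw [Polynomial.leadingCoeff_mul, Int.cast_mul, abs_mul]
    calc polyNorm (h * k) / |(k.leadingCoeff : ℝ)| = |(h.leadingCoeff : ℝ)| *
          (polyNorm (h * k) / (|(h.leadingCoeff : ℝ)| * |(k.leadingCoeff : ℝ)|)) := by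
          field_simp
      _ ≤ _ := by gcongr
  rw [mul_assoc]
  exact h1.trans (mul_le_mul hc (hM.trans hfin) hM0 (by positivity))

/-- Let `f, g ∈ ℤ[x]` be non-zero with leading coefficients `a₀, b₀`, let `q` be a
prime not dividing `gcd(a₀,b₀)`, and let `s` be the degree of a gcd `e` of the
reductions `f_q, g_q` in `(ℤ/qℤ)[x]`. Then every common divisor `h ∈ ℤ[x]` of `f` and
`g` has degree at most `s`, and every coefficient `c` of `h` satisfies
`|c| ≤ 2^s · gcd(a₀,b₀) · min { ‖f‖/|a₀|, ‖g‖/|b₀| }`. -/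
theorem common_divisor_bound_via_auxiliary_prime (f g : Polynomial ℤ)
    (hf : f ≠ 0) (hg : g ≠ 0) (q : ℕ) (hq : q.Prime)
    (hw : ¬ (q ∣ Int.gcd f.leadingCoeff g.leadingCoeff))
    (e : Polynomial (ZMod q))
    (hef : e ∣ f.map (Int.castRingHom (ZMod q)))
    (heg : e ∣ g.map (Int.castRingHom (ZMod q)))
    (hegcd : ∀ e' : Polynomial (ZMod q),
      e' ∣ f.map (Int.castRingHom (ZMod q)) →
      e' ∣ g.map (Int.castRingHom (ZMod q)) → e' ∣ e) :
    ∀ h : Polynomial ℤ, h ∣ f → h ∣ g →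
      h.natDegree ≤ e.natDegree ∧
      ∀ i : ℕ, (|h.coeff i| : ℝ) ≤
        2 ^ e.natDegree * (Int.gcd f.leadingCoeff g.leadingCoeff : ℝ) *
          min (polyNorm f / |(f.leadingCoeff : ℝ)|)
              (polyNorm g / |(g.leadingCoeff : ℝ)|) := by
  intro h hhf hhg
  haveI : Fact q.Prime := ⟨hq⟩
  have hlf : h.leadingCoeff ∣ f.leadingCoeff := Polynomial.leadingCoeff_dvd_leadingCoeff hhf
  have hlg : h.leadingCoeff ∣ g.leadingCoeff := Polynomial.leadingCoeff_dvd_leadingCoeff hhg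
  have hlgcd : h.leadingCoeff ∣ (Int.gcd f.leadingCoeff g.leadingCoeff : ℤ) :=
    Int.dvd_coe_gcd hlf hlg
  have hgpos : 0 < Int.gcd f.leadingCoeff g.leadingCoeff :=
    Int.gcd_pos_of_ne_zero_left _ (by simpa using hf)
  have hle : |h.leadingCoeff| ≤ (Int.gcd f.leadingCoeff g.leadingCoeff : ℤ) :=
    Int.le_of_dvd (by exact_mod_cast hgpos) ((abs_dvd _ _).mpr hlgcd)
  have hleR : |(h.leadingCoeff : ℝ)| ≤ (Int.gcd f.leadingCoeff g.leadingCoeff : ℕ) := by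
    exact_mod_cast hle
  have hlq : Int.castRingHom (ZMod q) h.leadingCoeff ≠ 0 := by
    intro h0
    rw [eq_intCast, ZMod.intCast_zmod_eq_zero_iff_dvd] at h0
    exact hw (by exact_mod_cast h0.trans hlgcd)
  have he0 : e ≠ 0 := by
    rintro rfl
    rw [zero_dvd_iff] at hef heg
    have a1 := congrArg (fun p => Polynomial.coeff p f.natDegree) hef
    have a2 := congrArg (fun p => Polynomial.coeff p g.natDegree) heg
    simp only [Polynomial.coeff_map, Polynomial.coeff_zero, eq_intCast,
      ZMod.intCast_zmod_eq_zero_iff_dvd, Polynomial.coeff_natDegree] at a1 a2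
    exact hw (by exact_mod_cast Int.dvd_coe_gcd a1 a2)
  have hdeg : h.natDegree ≤ e.natDegree := by
    rw [← Polynomial.natDegree_map_of_leadingCoeff_ne_zero _ hlq]
    exact Polynomial.natDegree_le_of_dvd
      (hegcd _ (Polynomial.map_dvd _ hhf) (Polynomial.map_dvd _ hhg)) he0
  refine ⟨hdeg, fun i => ?_⟩
  rcases min_choice (polyNorm f / |(f.leadingCoeff : ℝ)|)
    (polyNorm g / |(g.leadingCoeff : ℝ)|) with hm | hm
  · rw [hm]
    exact aux_bound f h hf hhf i _ _ hdeg hleR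
  · rw [hm]
    exact aux_bound g h hg hhg i _ _ hdeg hleR
end

section
/- Let f, g ∈ ℤ[x] be non-zero polynomials with leading coefficients a₀ and b₀, let d ∈ ℤ[x] be a greatest common divisor of f and g, and set w = gcd(a₀,b₀). Let Q be a finite set of primes, none dividing w, whose cardinality is strictly greater than the number of pairwise distinct prime divisors of |res(f/d, g/d)|. Then min over q ∈ Q of deg gcd(f_q, g_q) equals deg d. -/
open Polynomial

/-- The degree of the gcd of the reductions of `f, g ∈ ℤ[x]` modulo a prime `q`,
computed in the Euclidean domain `(ℤ/qℤ)[x]` (junk value `0` if `q` is not prime). -/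
noncomputable def modGcdDegree (q : ℕ) (f g : Polynomial ℤ) : ℕ :=
  if hq : q.Prime then
    letI : Fact q.Prime := ⟨hq⟩
    (EuclideanDomain.gcd (f.map (Int.castRingHom (ZMod q)))
      (g.map (Int.castRingHom (ZMod q)))).natDegree
  else 0

lemma det_sylv (f g : Polynomial ℤ) : _root_.resultant f g = Polynomial.resultant f g := by
  unfold _root_.resultant Polynomial.resultant
  let e : Fin (g.natDegree + f.natDegree) ≃ Fin (f.natDegree + g.natDegree) :=
    (finCongr (add_comm _ _)).trans Fin.revPerm
  have h : _root_.sylvester f g =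
      ((Polynomial.sylvester f g f.natDegree g.natDegree).transpose).submatrix e e := by
    ext i j
    obtain ⟨i, hi⟩ := i
    obtain ⟨j, hj⟩ := j
    simp only [_root_.sylvester, Polynomial.sylvester, Matrix.submatrix_apply,
      Matrix.transpose_apply, Matrix.of_apply, e, Equiv.trans_apply, finCongr_apply,
      Fin.revPerm_apply, Fin.addCases, Fin.val_rev, Fin.val_cast, Set.mem_Icc,
      Fin.val_castLT, Fin.val_subNat, eq_rec_constant]
    split_ifs <;> first | omega | rfl | (congr 1; omega)
  rw [h, Matrix.det_submatrix_equiv_self, Matrix.det_transpose]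

lemma res_ne_zero (f g : Polynomial ℤ) (hf : f ≠ 0)
    (h : ∀ e : Polynomial ℤ, e ∣ f → e ∣ g → IsUnit e) (hg : g ≠ 0) :
    Polynomial.resultant f g ≠ 0 := by
  intro h0
  have hinj : Function.Injective (Int.castRingHom ℚ) := Int.cast_injective
  have h1 : Polynomial.resultant (f.map (Int.castRingHom ℚ)) (g.map (Int.castRingHom ℚ)) = 0 := by
    rw [natDegree_map_eq_of_injective hinj, natDegree_map_eq_of_injective hinj,
      resultant_map_map, h0, map_zero]
  have h2 := (resultant_eq_zero_iff.1 h1).2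
  apply h2
  apply IsRelPrime.isCoprime
  intro k hkf hkg
  have hk0 : k ≠ 0 := by
    rintro rfl
    rw [zero_dvd_iff, Polynomial.map_eq_zero_iff hinj] at hkf
    exact hf hkf
  obtain ⟨b, hb, hbk⟩ := IsLocalization.integerNormalization_spec (nonZeroDivisors ℤ) k
  set N := IsLocalization.integerNormalization (nonZeroDivisors ℤ) k with hN
  have hb0 : b ≠ 0 := nonZeroDivisors.ne_zero hb
  have hmap : N.map (Int.castRingHom ℚ) = C (b : ℚ) * k := by
    have : N.map (algebraMap ℤ ℚ) = C (b : ℚ) * k := by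
      rw [hbk]
      ext n
      simp
    exact this
  have hNk : N.map (Int.castRingHom ℚ) ∣ k := by
    rw [hmap]
    have : IsUnit (C (b : ℚ)) := isUnit_C.2 (isUnit_iff_ne_zero.2 (by exact_mod_cast hb0))
    exact (this.mul_left_dvd).2 dvd_rfl
  have hPN : N.primPart.map (Int.castRingHom ℚ) ∣ N.map (Int.castRingHom ℚ) :=
    Polynomial.map_dvd _ (primPart_dvd N)
  have key : ∀ F : Polynomial ℤ, F ≠ 0 → k ∣ F.map (Int.castRingHom ℚ) → N.primPart ∣ F := by
    intro F hF hkF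
    exact (IsPrimitive.Int.dvd_iff_map_cast_dvd_map_cast _ _ (isPrimitive_primPart N)).2
      ((hPN.trans hNk).trans hkF)
  have hu := h _ (key f hf hkf) (key g hg hkg)
  have hNd : N.natDegree = 0 := by
    rw [← natDegree_primPart]; exact natDegree_eq_zero_of_isUnit hu
  have hkd : k.natDegree = 0 := by
    have := congrArg natDegree hmap
    rw [natDegree_map_eq_of_injective hinj, hNd, natDegree_C_mul (by exact_mod_cast hb0)] at this
    exact this.symm
  rw [Polynomial.isUnit_iff_degree_eq_zero, degree_eq_natDegree hk0, hkd]
  rfl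

/-- Let `d` be a gcd of the non-zero polynomials `f, g ∈ ℤ[x]`, and let `Q` be a finite
set of primes, none dividing `w = gcd(a₀, b₀)` (the gcd of the leading coefficients),
with `|Q|` strictly greater than the number of pairwise distinct prime divisors of
`|res(f/d, g/d)|`. Then `min_{q ∈ Q} deg gcd(f_q, g_q) = deg d`. -/
theorem min_modGcdDegree_eq_degree_gcd (f g d f₁ g₁ : Polynomial ℤ)
    (hf : f ≠ 0) (hg : g ≠ 0)
    (hdf : d ∣ f) (hdg : d ∣ g)
    (hdgcd : ∀ e : Polynomial ℤ, e ∣ f → e ∣ g → e ∣ d)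
    (hf₁ : f = d * f₁) (hg₁ : g = d * g₁)
    (Q : Finset ℕ) (hQprime : ∀ q ∈ Q, q.Prime)
    (hQw : ∀ q ∈ Q, ¬ (q ∣ Int.gcd f.leadingCoeff g.leadingCoeff))
    (hQcard : (_root_.resultant f₁ g₁).natAbs.primeFactors.card < Q.card) :
    Q.inf' (Finset.card_pos.mp (Nat.lt_of_le_of_lt (Nat.zero_le _) hQcard))
        (fun q => modGcdDegree q f g) = d.natDegree := by
  have hd0 : d ≠ 0 := by rintro rfl; simp at hf₁; exact hf hf₁
  have hf10 : f₁ ≠ 0 := by rintro rfl; simp at hf₁; exact hf hf₁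
  have hg10 : g₁ ≠ 0 := by rintro rfl; simp at hg₁; exact hg hg₁
  rw [det_sylv] at hQcard
  have hres : Polynomial.resultant f₁ g₁ ≠ 0 := by
    refine res_ne_zero f₁ g₁ hf10 (fun e h1 h2 => ?_) hg10
    have := hdgcd (d * e) (hf₁ ▸ mul_dvd_mul_left d h1) (hg₁ ▸ mul_dvd_mul_left d h2)
    obtain ⟨c, hc⟩ := this
    refine IsUnit.of_mul_eq_one c (mul_left_cancel₀ hd0 ?_)
    rw [← mul_assoc, ← hc, mul_one]
  have hlf : f.leadingCoeff = d.leadingCoeff * f₁.leadingCoeff := by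
    rw [hf₁, leadingCoeff_mul]
  have hlg : g.leadingCoeff = d.leadingCoeff * g₁.leadingCoeff := by
    rw [hg₁, leadingCoeff_mul]
  have hw : ∀ q ∈ Q, ¬ ((q : ℤ) ∣ f.leadingCoeff ∧ (q : ℤ) ∣ g.leadingCoeff) := by
    rintro q hq ⟨h1, h2⟩
    exact hQw q hq (Int.natCast_dvd_natCast.1 (Int.dvd_coe_gcd h1 h2))
  have hdeg : ∀ q ∈ Q, (d.map (Int.castRingHom (ZMod q))).natDegree = d.natDegree := by
    intro q hq
    apply natDegree_map_of_leadingCoeff_ne_zero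
    intro h
    have h : (q : ℤ) ∣ d.leadingCoeff := (ZMod.intCast_zmod_eq_zero_iff_dvd _ q).1 h
    exact hw q hq ⟨hlf ▸ h.mul_right _, hlg ▸ h.mul_right _⟩
  apply le_antisymm
  · obtain ⟨q, hq, hqn⟩ : ∃ q ∈ Q, q ∉ (Polynomial.resultant f₁ g₁).natAbs.primeFactors :=
      Finset.exists_mem_notMem_of_card_lt_card hQcard
    refine (Finset.inf'_le _ hq).trans ?_
    have hp := hQprime q hq
    haveI : Fact q.Prime := ⟨hp⟩
    have hrq : ((Polynomial.resultant f₁ g₁ : ℤ) : ZMod q) ≠ 0 := by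
      intro h
      rw [ZMod.intCast_zmod_eq_zero_iff_dvd] at h
      exact hqn (Nat.mem_primeFactors.2 ⟨hp, Int.natCast_dvd.1 h, by simpa using hres⟩)
    simp only [modGcdDegree, dif_pos hp]
    have hcop : IsCoprime (f₁.map (Int.castRingHom (ZMod q)))
        (g₁.map (Int.castRingHom (ZMod q))) := by
      by_cases H : f₁.natDegree ≠ 0 ∨ g₁.natDegree ≠ 0
      · obtain ⟨a, b, -, -, hab⟩ := exists_mul_add_mul_eq_C_resultant f₁ g₁ le_rfl le_rfl H
        have h := congrArg (Polynomial.map (Int.castRingHom (ZMod q))) hab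
        simp only [Polynomial.map_add, Polynomial.map_mul, map_C] at h
        set r := (Int.castRingHom (ZMod q)) (Polynomial.resultant f₁ g₁) with hr
        have hr0 : r ≠ 0 := hrq
        refine ⟨C r⁻¹ * a.map (Int.castRingHom (ZMod q)),
          C r⁻¹ * b.map (Int.castRingHom (ZMod q)), ?_⟩
        calc _ = C r⁻¹ * (f₁.map (Int.castRingHom (ZMod q)) * a.map (Int.castRingHom (ZMod q))
              + g₁.map (Int.castRingHom (ZMod q)) * b.map (Int.castRingHom (ZMod q))) := by ring
          _ = 1 := by rw [h, ← C_mul, inv_mul_cancel₀ hr0, C_1]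
      · push Not at H
        have hfc := eq_C_of_natDegree_eq_zero H.1
        have hgc := eq_C_of_natDegree_eq_zero H.2
        have hlf1 : f₁.leadingCoeff = f₁.coeff 0 := by rw [leadingCoeff, H.1]
        have hlg1 : g₁.leadingCoeff = g₁.coeff 0 := by rw [leadingCoeff, H.2]
        by_cases h0 : (q : ℤ) ∣ f₁.coeff 0
        · have h1 : ¬ (q : ℤ) ∣ g₁.coeff 0 := fun h1 => hw q hq
            ⟨hlf ▸ hlf1 ▸ h0.mul_left _, hlg ▸ hlg1 ▸ h1.mul_left _⟩
          have : IsUnit (g₁.map (Int.castRingHom (ZMod q))) := by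
            rw [hgc, map_C]
            refine isUnit_C.2 (isUnit_iff_ne_zero.2 fun h => h1 ?_)
            exact (ZMod.intCast_zmod_eq_zero_iff_dvd _ q).1 h
          obtain ⟨c, hc⟩ := this.exists_left_inv
          exact ⟨0, c, by rw [hc, zero_mul, zero_add]⟩
        · have : IsUnit (f₁.map (Int.castRingHom (ZMod q))) := by
            rw [hfc, map_C]
            refine isUnit_C.2 (isUnit_iff_ne_zero.2 fun h => h0 ?_)
            exact (ZMod.intCast_zmod_eq_zero_iff_dvd _ q).1 h
          obtain ⟨c, hc⟩ := this.exists_left_inv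
          exact ⟨c, 0, by rw [hc, zero_mul, add_zero]⟩
    rw [← hdeg q hq]
    obtain ⟨a, b, hab⟩ := hcop
    have hdq0 : d.map (Int.castRingHom (ZMod q)) ≠ 0 := by
      intro h0
      have h : (Int.castRingHom (ZMod q)) d.leadingCoeff = 0 := by
        rw [leadingCoeff, ← coeff_map, h0, coeff_zero]
      have h : (q : ℤ) ∣ d.leadingCoeff := (ZMod.intCast_zmod_eq_zero_iff_dvd _ q).1 h
      exact hw q hq ⟨hlf ▸ h.mul_right _, hlg ▸ h.mul_right _⟩
    refine natDegree_le_of_dvd ?_ hdq0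
    have e : d.map (Int.castRingHom (ZMod q)) = a * f.map (Int.castRingHom (ZMod q)) +
        b * g.map (Int.castRingHom (ZMod q)) := by
      rw [hf₁, hg₁, Polynomial.map_mul, Polynomial.map_mul]
      linear_combination (-(d.map (Int.castRingHom (ZMod q)))) * hab
    rw [e]
    exact dvd_add ((EuclideanDomain.gcd_dvd_left _ _).mul_left _)
      ((EuclideanDomain.gcd_dvd_right _ _).mul_left _)
  · apply Finset.le_inf'
    intro q hq
    have hp := hQprime q hq
    haveI : Fact q.Prime := ⟨hp⟩
    simp only [modGcdDegree, dif_pos hp]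
    rw [← hdeg q hq]
    refine natDegree_le_of_dvd (EuclideanDomain.dvd_gcd (Polynomial.map_dvd _ hdf)
      (Polynomial.map_dvd _ hdg)) ?_
    intro h
    obtain ⟨h1, h2⟩ := EuclideanDomain.gcd_eq_zero_iff.1 h
    refine hw q hq ⟨(ZMod.intCast_zmod_eq_zero_iff_dvd _ q).1 ?_,
      (ZMod.intCast_zmod_eq_zero_iff_dvd _ q).1 ?_⟩
    · change (Int.castRingHom (ZMod q)) f.leadingCoeff = 0
      rw [leadingCoeff, ← coeff_map, h1, coeff_zero]
    · change (Int.castRingHom (ZMod q)) g.leadingCoeff = 0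
      rw [leadingCoeff, ← coeff_map, h2, coeff_zero]
end

section
/- Let f, g ∈ ℤ[x] be non-zero polynomials and let q be a prime that does not divide at least one of theleading coefficients of f and g. If a greatest common divisor of f_q and g_q in (ℤ/qℤ)[x] has degree 0, then f and g have no common divisor of positive degree in ℤ[x]. -/
open Polynomial

/-- Let `f, g ∈ ℤ[x]` be non-zero and let `q` be a prime not dividing at least one of
the leading coefficients of `f` and `g`. If a greatest common divisor of the reductions
`f_q, g_q` in `(ℤ/qℤ)[x]` has degree `0`, then `f` and `g` have no common divisor of
positive degree in `ℤ[x]`. -/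
theorem no_common_divisor_of_modular_gcd_deg_zero (f g : Polynomial ℤ)
    (hf : f ≠ 0) (hg : g ≠ 0) (q : ℕ) (hq : q.Prime)
    (hlead : ¬ ((q : ℤ) ∣ f.leadingCoeff) ∨ ¬ ((q : ℤ) ∣ g.leadingCoeff))
    (e : Polynomial (ZMod q))
    (hef : e ∣ f.map (Int.castRingHom (ZMod q)))
    (heg : e ∣ g.map (Int.castRingHom (ZMod q)))
    (hegcd : ∀ e' : Polynomial (ZMod q),
      e' ∣ f.map (Int.castRingHom (ZMod q)) →
      e' ∣ g.map (Int.castRingHom (ZMod q)) → e' ∣ e)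
    (hdeg : e.natDegree = 0) :
    ¬ ∃ h : Polynomial ℤ, h ∣ f ∧ h ∣ g ∧ 0 < h.natDegree := by
  haveI : Fact q.Prime := ⟨hq⟩
  rintro ⟨h, hhf, hhg, hpos⟩
  have key : ∀ p : Polynomial ℤ, ¬ ((q : ℤ) ∣ p.leadingCoeff) → h ∣ p →
      e ∣ p.map (Int.castRingHom (ZMod q)) → False := by
    intro p hp hhp hep
    have hpl : Int.castRingHom (ZMod q) p.leadingCoeff ≠ 0 := by
      intro h0
      exact hp ((ZMod.intCast_zmod_eq_zero_iff_dvd _ _).1 (by simpa using h0))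
    have hhl : Int.castRingHom (ZMod q) h.leadingCoeff ≠ 0 := by
      intro h0
      apply hp
      obtain ⟨k, rfl⟩ := hhp
      rw [leadingCoeff_mul]
      exact Dvd.dvd.mul_right
        ((ZMod.intCast_zmod_eq_zero_iff_dvd _ _).1 (by simpa using h0)) _
    have he : e ≠ 0 := by
      rintro rfl
      have h0 := zero_dvd_iff.1 hep
      apply hpl
      have := congrArg (fun r => r.coeff p.natDegree) h0
      simpa [coeff_map] using this
    have hdvd := hegcd _ (Polynomial.map_dvd (Int.castRingHom (ZMod q)) hhf)
      (Polynomial.map_dvd (Int.castRingHom (ZMod q)) hhg)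
    have hle := natDegree_le_of_dvd hdvd he
    rw [natDegree_map_of_leadingCoeff_ne_zero _ hhl] at hle
    omega
  rcases hlead with hl | hl
  · exact key f hl hhf hef
  · exact key g hl hhg heg
end

section
/- Let f, g ∈ ℤ[x] be non-zero primitive polynomials with leading coefficients a₀ and b₀, and let p be a prime not dividing gcd(a₀,b₀). Suppose D ∈ ℤ[x] is a primitive polynomial such that D divides both f and g in ℤ[x] and deg D = deg gcd(f_p, g_p), where gcd(f_p, g_p) is a greatest common divisor of f_p and g_p in (ℤ/pℤ)[x]. Then D is a greatest common divisor of f and g in ℤ[x], i.e. every common divisor of f and g divides D. -/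
open Polynomial

/-- Let `f, g ∈ ℤ[x]` be non-zero primitive polynomials with leading coefficients
`a₀, b₀` and let `p` be a prime not dividing `gcd(a₀, b₀)`. If `D ∈ ℤ[x]` is a
primitive common divisor of `f` and `g` whose degree equals the degree of a greatest
common divisor `e` of the reductions `f_p, g_p` in `(ℤ/pℤ)[x]`, then `D` is a greatest
common divisor of `f` and `g` in `ℤ[x]`: every common divisor of `f` and `g`
divides `D`. -/
theorem primitive_divisor_of_modular_degree_is_gcd (f g : Polynomial ℤ)
    (hf : f ≠ 0) (hg : g ≠ 0) (hfprim : f.IsPrimitive) (hgprim : g.IsPrimitive)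
    (p : ℕ) (hp : p.Prime)
    (hw : ¬ (p ∣ Int.gcd f.leadingCoeff g.leadingCoeff))
    (D : Polynomial ℤ) (hDprim : D.IsPrimitive) (hDf : D ∣ f) (hDg : D ∣ g)
    (e : Polynomial (ZMod p))
    (hef : e ∣ f.map (Int.castRingHom (ZMod p)))
    (heg : e ∣ g.map (Int.castRingHom (ZMod p)))
    (hegcd : ∀ e' : Polynomial (ZMod p),
      e' ∣ f.map (Int.castRingHom (ZMod p)) →
      e' ∣ g.map (Int.castRingHom (ZMod p)) → e' ∣ e)
    (hdeg : D.natDegree = e.natDegree) :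
    ∀ h : Polynomial ℤ, h ∣ f → h ∣ g → h ∣ D := by
  intro h hhf hhg
  haveI : Fact p.Prime := ⟨hp⟩
  letI : GCDMonoid (Polynomial ℤ) := UniqueFactorizationMonoid.toGCDMonoid _
  have key : ∀ G : Polynomial ℤ, G ∣ f → G ∣ g →
      (Int.castRingHom (ZMod p)) G.leadingCoeff ≠ 0 := by
    intro G h1 h2 h0
    apply hw
    have hpG : (p : ℤ) ∣ G.leadingCoeff := by
      rw [← ZMod.intCast_zmod_eq_zero_iff_dvd]
      simpa using h0
    have := Int.dvd_coe_gcd (hpG.trans (leadingCoeff_dvd_leadingCoeff h1))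
      (hpG.trans (leadingCoeff_dvd_leadingCoeff h2))
    exact_mod_cast this
  have he : e ≠ 0 := by
    rintro rfl
    apply hw
    rw [zero_dvd_iff] at hef heg
    have aux : ∀ q : Polynomial ℤ, q.map (Int.castRingHom (ZMod p)) = 0 →
        (p : ℤ) ∣ q.leadingCoeff := by
      intro q hq
      rw [← ZMod.intCast_zmod_eq_zero_iff_dvd]
      have := congrArg (fun r => r.coeff q.natDegree) hq
      simpa using this
    have := Int.dvd_coe_gcd (aux f hef) (aux g heg)
    exact_mod_cast this
  have hGf : gcd f g ∣ f := gcd_dvd_left f g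
  have hGg : gcd f g ∣ g := gcd_dvd_right f g
  have hhG : h ∣ gcd f g := dvd_gcd hhf hhg
  obtain ⟨k, hk⟩ : D ∣ gcd f g := dvd_gcd hDf hDg
  generalize gcd f g = G at *
  have hG0 : G ≠ 0 := ne_zero_of_dvd_ne_zero hf hGf
  have hd : G.natDegree ≤ e.natDegree := by
    rw [← natDegree_map_of_leadingCoeff_ne_zero _ (key G hGf hGg)]
    exact natDegree_le_of_dvd (hegcd _ (Polynomial.map_dvd _ hGf) (Polynomial.map_dvd _ hGg)) he
  have hD0 : D ≠ 0 := by rintro rfl; simp [hG0] at hk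
  have hk0 : k ≠ 0 := by rintro rfl; simp [hG0] at hk
  have hkd : k.natDegree = 0 := by
    rw [hk, natDegree_mul hD0 hk0] at hd
    omega
  rw [natDegree_eq_zero] at hkd
  obtain ⟨c, rfl⟩ := hkd
  have hu : IsUnit c := hfprim c ((Dvd.intro_left _ hk.symm).trans hGf)
  rw [hk] at hhG
  exact ((hu.map (C : ℤ →+* Polynomial ℤ)).dvd_mul_right).1 hhG
end
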